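/- Let d ≥ 1, C = 2/(2π)^{d/2}, and fix constants m_0 > 0, σ_0 > 0, 0 < y < 1/2 and 0 < x < 1. For each integer n ≥ 2, let m_n be any positive integer with |m_n − m_0 (log n)^y| ≤ 1 and set σ_n = σ_0 · n^{−x/(m_n d)}. Then, as n → ∞, (i) n σ_n^{m_n d + 1} / (m_n² C^{m_n}) → ∞, and (ii) m_n 2^{m_n} σ_n → 0. -/

import Mathlib

/-!
Write `L = log n`. The hypothesis on `m` gives `m → ∞`, and since `y < 1/2` it also gives
`m² / L → 0`, hence `m / L → 0` and `L / m → ∞`. Since `log σ = log σ₀ - x L / (m d)`,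
the logarithm of the first quantity is `L` times a factor tending to `1 - x > 0`, because every
other term is `O(m) + O(L / m) = o(L)`. The logarithm of the second quantity is at most
`L / m` times a factor tending to `-x / d < 0`, because `m` is negligible against `L / m`:
this is where `m² = o(L)`, that is `y < 1/2`, is needed. So the two logarithms tend to
`+∞` and `-∞` respectively.
-/

open Real Filter

/-- A sequence within distance `1` of `m₀ L ^ y`, where `L → ∞` and `0 < y < 1/2`, tends to
infinity and is `o(√L)`. The second part follows from
`(m₀ L ^ y + 1)² / L = (m₀ L ^ (y - 1/2) + L ^ (-1/2))²`. -/
lemma growth_of_near_rpow {m₀ y : ℝ} (hm₀ : 0 < m₀) (hy : 0 < y) (hy' : y < 1 / 2)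
    {L M : ℕ → ℝ} (hL : Tendsto L atTop atTop)
    (hM : ∀ᶠ n in atTop, 0 < M n ∧ |M n - m₀ * L n ^ y| ≤ 1) :
    Tendsto M atTop atTop ∧ Tendsto (fun n => M n ^ 2 / L n) atTop (nhds 0) := by
  constructor
  · have h1 : Tendsto (fun n => m₀ * L n ^ y - 1) atTop atTop :=
      tendsto_atTop_add_const_right _ _
        (((tendsto_rpow_atTop hy).comp hL).const_mul_atTop hm₀)
    refine tendsto_atTop_mono' _ ?_ h1
    filter_upwards [hM] with n hn
    linarith [(abs_le.1 hn.2).1]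
  · have h1 : Tendsto (fun n => L n ^ (-(1 / 2 - y))) atTop (nhds 0) :=
      (tendsto_rpow_neg_atTop (by linarith)).comp hL
    have h2 : Tendsto (fun n => L n ^ (-(1 / 2 : ℝ))) atTop (nhds 0) :=
      (tendsto_rpow_neg_atTop (by norm_num)).comp hL
    have h3 : Tendsto (fun n => (m₀ * L n ^ (-(1 / 2 - y)) + L n ^ (-(1 / 2 : ℝ))) ^ 2)
        atTop (nhds 0) := by
      simpa using ((h1.const_mul m₀).add h2).pow 2
    refine squeeze_zero' ?_ ?_ h3
    · filter_upwards [hL.eventually_gt_atTop 0] with n hn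
      positivity
    · filter_upwards [hL.eventually_gt_atTop 0, hM] with n hn hMn
      have e1 : L n ^ (-(1 / 2 - y)) = L n ^ y * L n ^ (-(1 / 2 : ℝ)) := by
        rw [← Real.rpow_add hn]; congr 1; ring
      have e2 : (L n ^ (-(1 / 2 : ℝ))) ^ 2 = (L n)⁻¹ := by
        rw [← Real.rpow_natCast, ← Real.rpow_mul hn.le, ← Real.rpow_neg_one]
        norm_num
      have e3 : (m₀ * L n ^ (-(1 / 2 - y)) + L n ^ (-(1 / 2 : ℝ))) ^ 2
          = (m₀ * L n ^ y + 1) ^ 2 / L n := by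
        rw [e1, div_eq_mul_inv _ (L n), ← e2]; ring
      rw [e3]
      have := hMn.1
      gcongr
      linarith [(abs_le.1 hMn.2).2]

/-- Realizability of the joint scaling: with `m_n ≈ m₀ (log n)^y`, `0 < y < 1/2`, and
`σ_n = σ₀ n^{−x/(m_n d)}`, `0 < x < 1`, the rate conditions
`n σ_n^{m_n d + 1}/(m_n² C^{m_n}) → ∞` and `m_n 2^{m_n} σ_n → 0` hold, `C = 2/(2π)^{d/2}`. -/
theorem stmt14 (d : ℕ) (hd : 1 ≤ d) (m₀ σ₀ x y : ℝ) (hm₀ : 0 < m₀) (hσ₀ : 0 < σ₀)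
    (hy : 0 < y) (hy' : y < 1 / 2) (hx : 0 < x) (hx' : x < 1)
    (m : ℕ → ℕ) (hm : ∀ n : ℕ, 2 ≤ n → 0 < m n ∧ |(m n : ℝ) - m₀ * Real.log n ^ y| ≤ 1)
    (σ : ℕ → ℝ) (hσ : ∀ n : ℕ, 2 ≤ n → σ n = σ₀ * (n : ℝ) ^ (-x / (m n * d))) :
    Tendsto (fun n : ℕ =>
        (n : ℝ) * σ n ^ (m n * d + 1) /
          ((m n : ℝ) ^ 2 * (2 / (2 * Real.pi) ^ ((d : ℝ) / 2)) ^ (m n)))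
      atTop atTop ∧
    Tendsto (fun n : ℕ => (m n : ℝ) * 2 ^ (m n) * σ n) atTop (nhds 0) := by
  have hd0 : (0 : ℝ) < d := by exact_mod_cast hd
  have hL : Tendsto (fun n : ℕ => Real.log n) atTop atTop :=
    Real.tendsto_log_atTop.comp tendsto_natCast_atTop_atTop
  obtain ⟨hM, hM2⟩ := growth_of_near_rpow (M := fun n => (m n : ℝ)) hm₀ hy hy' hL (by
    filter_upwards [eventually_ge_atTop 2] with n hn
    exact ⟨by exact_mod_cast (hm n hn).1, (hm n hn).2⟩)
  have hinv : Tendsto (fun n => ((m n : ℝ))⁻¹) atTop (nhds 0) := hM.inv_tendsto_atTop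
  have hLinv : Tendsto (fun n : ℕ => (Real.log n)⁻¹) atTop (nhds 0) := hL.inv_tendsto_atTop
  have hpos : ∀ᶠ n : ℕ in atTop, 0 < (n : ℝ) ∧ 0 < Real.log n ∧ 0 < (m n : ℝ) ∧ 0 < σ n ∧
      Real.log (σ n) = Real.log σ₀ - x * Real.log n / (m n * d) := by
    filter_upwards [eventually_ge_atTop 2] with n hn
    have hn0 : (0 : ℝ) < n := by positivity
    refine ⟨hn0, Real.log_pos (by exact_mod_cast hn), by exact_mod_cast (hm n hn).1, ?_, ?_⟩
    · rw [hσ n hn]; positivity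
    · rw [hσ n hn, Real.log_mul hσ₀.ne' (by positivity), Real.log_rpow hn0]; ring
  have hML : Tendsto (fun n : ℕ => (m n : ℝ) / Real.log n) atTop (nhds 0) := by
    have h := hM2.mul hinv
    rw [zero_mul] at h
    refine h.congr' ?_
    filter_upwards [hpos] with n ⟨_, hl, hmn, _⟩
    field_simp
  have hLM : Tendsto (fun n : ℕ => Real.log n / (m n : ℝ)) atTop atTop := by
    have h : Tendsto (fun n : ℕ => (m n : ℝ) / Real.log n) atTop (nhdsWithin 0 (Set.Ioi 0)) := by
      refine tendsto_nhdsWithin_iff.2 ⟨hML, ?_⟩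
      filter_upwards [hpos] with n ⟨_, hl, hmn, _⟩
      exact div_pos hmn hl
    refine h.inv_tendsto_nhdsGT_zero.congr fun n => ?_
    simp [inv_div]
  constructor
  · set C : ℝ := 2 / (2 * Real.pi) ^ ((d : ℝ) / 2) with hC
    have hC0 : 0 < C := by positivity
    clear_value C
    have hlogm : Tendsto (fun n : ℕ => Real.log (m n) / Real.log n) atTop (nhds 0) := by
      refine squeeze_zero' ?_ ?_ hML
      · filter_upwards [hpos] with n ⟨_, hl, _⟩
        exact div_nonneg (Real.log_natCast_nonneg _) hl.le
      · filter_upwards [hpos] with n ⟨_, hl, hmn, _⟩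
        gcongr
        exact Real.log_le_self hmn.le
    -- The limit of the logarithm of the first quantity divided by `log n`.
    have hfac : Tendsto (fun n : ℕ => (1 - x) - x / d * (m n : ℝ)⁻¹
        + Real.log σ₀ * (d * ((m n : ℝ) / Real.log n) + (Real.log n)⁻¹)
        - 2 * (Real.log (m n) / Real.log n) - Real.log C * ((m n : ℝ) / Real.log n))
        atTop (nhds (1 - x)) := by
      have h := ((((hinv.const_mul (x / d)).const_sub (1 - x)).add
        (((hML.const_mul (d : ℝ)).add hLinv).const_mul (Real.log σ₀))).sub
        (hlogm.const_mul 2)).sub (hML.const_mul (Real.log C))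
      simpa using h
    refine (Real.tendsto_exp_atTop.comp
      (hL.atTop_mul_pos (by linarith : 0 < 1 - x) hfac)).congr' ?_
    filter_upwards [hpos] with n ⟨hn, hl, hmn, hs, hlog⟩
    have hval : 0 < (n : ℝ) * σ n ^ (m n * d + 1) / ((m n : ℝ) ^ 2 * C ^ (m n)) := by positivity
    rw [← Real.exp_log hval, Function.comp_apply, Real.log_div (by positivity) (by positivity),
      Real.log_mul (by positivity) (by positivity), Real.log_mul (by positivity) (by positivity),
      Real.log_pow, Real.log_pow, Real.log_pow, hlog]
    congr 1
    push_cast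
    field_simp
    ring
  · -- Bounding `log m` and `m log 2` by `m` makes the logarithm at most `log n / m` times this
    -- factor.
    have hfac : Tendsto (fun n : ℕ => 2 * ((m n : ℝ) ^ 2 / Real.log n)
        + Real.log σ₀ * ((m n : ℝ) / Real.log n) - x / d) atTop (nhds (-(x / d))) := by
      simpa using ((hM2.const_mul 2).add (hML.const_mul (Real.log σ₀))).sub_const (x / d)
    have hneg : -(x / d) < 0 := neg_neg_of_pos (by positivity)
    refine squeeze_zero' ?_ ?_ (Real.tendsto_exp_atBot.comp (hLM.atTop_mul_neg hneg hfac))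
    · filter_upwards [hpos] with n ⟨_, _, _, hs, _⟩
      positivity
    · filter_upwards [hpos] with n ⟨hn, hl, hmn, hs, hlog⟩
      have hval : 0 < (m n : ℝ) * 2 ^ (m n) * σ n := by positivity
      rw [← Real.exp_log hval, Function.comp_apply, Real.exp_le_exp,
        Real.log_mul (by positivity) (by positivity),
        Real.log_mul (by positivity) (by positivity), Real.log_pow, hlog]
      have h1 : Real.log (m n) ≤ m n := Real.log_le_self hmn.le
      have h2 : (m n : ℝ) * Real.log 2 ≤ m n :=
        mul_le_of_le_one_right hmn.le (by linarith [Real.log_two_lt_d9])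
      have h3 : Real.log n / (m n : ℝ) * (2 * ((m n : ℝ) ^ 2 / Real.log n)
          + Real.log σ₀ * ((m n : ℝ) / Real.log n) - x / d)
          = 2 * m n + Real.log σ₀ - x * Real.log n / (m n * d) := by
        field_simp
      rw [h3]
      linarith
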